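/- The homology of the chain complex of abelian groups (C(j)_*)^{D_{2p}} of D_{2p}-invariants of the dihedral cellular complex satisfies: H_n ≅ A_n ⊕ P_n ⊕ Q_n, where A_n = ℤ if n = 0 and 0 otherwise; P_n = ℤ/p if 0 < n < 2m−1 and n ≡ 3 (mod 4), and 0 otherwise; and Q_n = ℤ if n = 2m−1 and m is even, Q_n = ℤ/2 if m−1 ≤ n < 2m−1 and n ≡ m−1 (mod 2), and Q_n = 0 otherwise. (This is the value at the orbit D_{2p}/D_{2p} of the Bredon homology H^{D_{2p}}_*(S(mγ); constant ℤ) = ℤ ⊕ ₀A_m ⊕ B_m[m−1].) -/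

import Mathlib

open DihedralGroup Finsupp

noncomputable section

namespace DihedralCell

variable (p : ℕ)

/-- ζ, the rotation of order `p`. -/
def zeta : DihedralGroup p := .r 1

/-- τ, the reflection. -/
def tau : DihedralGroup p := .sr 0

/-- The order-2 subgroup ⟨τ⟩. -/
def Htau : Subgroup (DihedralGroup p) := Subgroup.zpowers (tau p)

/-- Left cosets of ⟨τ⟩. -/
abbrev Cos := DihedralGroup p ⧸ Htau p

/-- Cell names of the dihedral cellular structure on `S(mγ_j)`: `a0 k q`/`b0 k q` are the
cells `q·a_{k,0}`, `q·b_{k,0}` (indexed by cosets of ⟨τ⟩); `a k l g`, `b k l g` (`1 ≤ l ≤ k-1`)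
are the free cells `g·a_{k,l}`, `g·b_{k,l}`; `c k g` is `g·c_k`. -/
inductive CIdx : Type
  | a0 (k : ℕ) (q : Cos p)
  | b0 (k : ℕ) (q : Cos p)
  | a (k l : ℕ) (g : DihedralGroup p)
  | b (k l : ℕ) (g : DihedralGroup p)
  | c (k : ℕ) (g : DihedralGroup p)

variable {p}

/-- The dimension of a cell. -/
def degC : CIdx p → ℕ
  | .a0 k _ => k - 1
  | .b0 k _ => k - 1
  | .a k l _ => k + l - 1
  | .b k l _ => k + l - 1
  | .c k _ => 2 * k - 1

/-- Validity of a cell index (the junk-free cells), for the sphere `S(mγ)`. -/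
def validC (m : ℕ) : CIdx p → Prop
  | .a0 k _ => 1 ≤ k ∧ k ≤ m
  | .b0 k _ => 1 ≤ k ∧ k ≤ m
  | .a k l _ => 1 ≤ l ∧ l ≤ k - 1 ∧ k ≤ m
  | .b k l _ => 1 ≤ l ∧ l ≤ k - 1 ∧ k ≤ m
  | .c k _ => 1 ≤ k ∧ k ≤ m

/-- The action of the dihedral group on cells. -/
def actC (g' : DihedralGroup p) : CIdx p → CIdx p
  | .a0 k q => .a0 k (g' • q)
  | .b0 k q => .b0 k (g' • q)
  | .a k l g => .a k l (g' * g)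
  | .b k l g => .b k l (g' * g)
  | .c k g => .c k (g' * g)

variable (p)

/-- The total module of cellular chains (all degrees together). -/
abbrev ChC := CIdx p →₀ ℤ

/-- The `ℤ`-linear action of `D_{2p}` on chains. -/
def rhoC (g : DihedralGroup p) : ChC p →ₗ[ℤ] ChC p :=
  Finsupp.lmapDomain ℤ ℤ (actC g)

/-- The submodule of chains of degree `n` (the degree-`n` term of the complex `C(j)`). -/
def Csub (m n : ℕ) : Submodule ℤ (ChC p) :=
  Finsupp.supported ℤ ℤ {i | validC m i ∧ degC i = n}

/-- The boundary of a single cell, following Lemma 2.2 of the paper (for the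
representation `γ_j`, i.e. with `ζ_i = ζ^j`). -/
def bndC (j : ℕ) : CIdx p → ChC p
  | .a0 k q => if k ≤ 1 then 0 else single (.a0 (k-1) q) 1 - single (.b0 (k-1) q) 1
  | .b0 k q => if k ≤ 1 then 0 else single (.a0 (k-1) q) 1 - single (.b0 (k-1) q) 1
  | .c k g =>
      if k ≤ 1 then
        (single (.b0 1 (↑(g * zeta p ^ (j * ((p+1)/2))))) 1 : ChC p) - single (.a0 1 ↑g) 1
      else
        single (.a k (k-1) g) (-1) + single (.a k (k-1) (g * tau p)) ((-1)^k)
        + single (.b k (k-1) (g * zeta p ^ (j * ((p+1)/2)))) 1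
        + single (.b k (k-1) (g * zeta p ^ (j * ((p+1)/2)) * tau p)) ((-1)^(k-1))
  | .a k l g =>
      if l = 0 then 0
      else if l = k - 1 then
        (if k = 2 then (single (.a0 k (↑g : Cos p)) (-1) : ChC p)
         else single (.a k (k-2) g) (-1) + single (.a k (k-2) (g * tau p)) ((-1)^(k-1)))
        + single (.c (k-1) g) (-1)
        - ∑ t ∈ Finset.range ((p-1)/2), single (.c (k-1) (g * zeta p ^ (j * (t+1)))) 1
        + ∑ t ∈ Finset.range ((p-1)/2),
            single (.c (k-1) (g * zeta p ^ (j * (t+1)) * tau p)) ((-1)^(k-2))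
      else if l = 1 then
        single (.a (k-1) 1 g) 1 - single (.b (k-1) 1 g) 1 + single (.a0 k (↑g : Cos p)) ((-1)^(k-1))
      else
        single (.a (k-1) l g) 1 - single (.b (k-1) l g) 1
        + single (.a k (l-1) g) ((-1)^(k-l)) + single (.a k (l-1) (g * tau p)) ((-1)^(k-1))
  | .b k l g =>
      if l = 0 then 0
      else if l = k - 1 then
        (if k = 2 then (single (.b0 k (↑g : Cos p)) (-1) : ChC p)
         else single (.b k (k-2) g) (-1) + single (.b k (k-2) (g * tau p)) ((-1)^(k-1)))
        + single (.c (k-1) g) (-1)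
        - ∑ t ∈ Finset.range ((p-1)/2), single (.c (k-1) (g * zeta p ^ (j * (t+1)))) 1
        + ∑ t ∈ Finset.range ((p-1)/2),
            single (.c (k-1) (g * zeta p ^ (j * (t+1)) * tau p)) ((-1)^(k-2))
      else if l = 1 then
        single (.a (k-1) 1 g) 1 - single (.b (k-1) 1 g) 1 + single (.b0 k (↑g : Cos p)) ((-1)^(k-1))
      else
        single (.a (k-1) l g) 1 - single (.b (k-1) l g) 1
        + single (.b k (l-1) g) ((-1)^(k-l)) + single (.b k (l-1) (g * tau p)) ((-1)^(k-1))

/-- The differential of the dihedral cellular complex `C(j)`. -/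
def DC (j : ℕ) : ChC p →ₗ[ℤ] ChC p :=
  Finsupp.lift (ChC p) ℤ (CIdx p) (bndC p j)

/-- The submodule of `D_{2p}`-invariant chains of degree `n`. -/
def InvC (m n : ℕ) : Submodule ℤ (ChC p) :=
  Csub p m n ⊓ (⨅ g : DihedralGroup p, LinearMap.ker (rhoC p g - LinearMap.id))

/-- Cycles of degree `n` of the underlying complex of abelian groups. -/
def ZcC (m j n : ℕ) : Submodule ℤ (ChC p) := Csub p m n ⊓ LinearMap.ker (DC p j)

/-- Degree-`n` homology of the underlying complex of abelian groups of `C(j)`. -/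
def HcC (m j n : ℕ) : Type :=
  ↥(ZcC p m j n) ⧸ Submodule.comap (ZcC p m j n).subtype
    (Submodule.map (DC p j) (Csub p m (n+1)))

instance (m j n : ℕ) : AddCommGroup (HcC p m j n) :=
  inferInstanceAs (AddCommGroup (↥(ZcC p m j n) ⧸ Submodule.comap (ZcC p m j n).subtype
    (Submodule.map (DC p j) (Csub p m (n+1)))))

instance (m j n : ℕ) : Module ℤ (HcC p m j n) :=
  inferInstanceAs (Module ℤ (↥(ZcC p m j n) ⧸ Submodule.comap (ZcC p m j n).subtype
    (Submodule.map (DC p j) (Csub p m (n+1)))))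

/-- Cycles of degree `n` of the complex of `D_{2p}`-invariants `(C(j))^{D_{2p}}`. -/
def ZinvC (m j n : ℕ) : Submodule ℤ (ChC p) := InvC p m n ⊓ LinearMap.ker (DC p j)

/-- Degree-`n` homology of the complex of `D_{2p}`-invariants of `C(j)`. -/
def HinvC (m j n : ℕ) : Type :=
  ↥(ZinvC p m j n) ⧸ Submodule.comap (ZinvC p m j n).subtype
    (Submodule.map (DC p j) (InvC p m (n+1)))

instance (m j n : ℕ) : AddCommGroup (HinvC p m j n) :=
  inferInstanceAs (AddCommGroup (↥(ZinvC p m j n) ⧸ Submodule.comap (ZinvC p m j n).subtype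
    (Submodule.map (DC p j) (InvC p m (n+1)))))

instance (m j n : ℕ) : Module ℤ (HinvC p m j n) :=
  inferInstanceAs (Module ℤ (↥(ZinvC p m j n) ⧸ Submodule.comap (ZinvC p m j n).subtype
    (Submodule.map (DC p j) (InvC p m (n+1)))))

/-- The dual module: `ℤ`-linear functionals on chains. -/
abbrev DualC := ChC p →ₗ[ℤ] ℤ

/-- Degree-`n` cochains of `Hom_{ℤ[D_{2p}]}(C(j), ℤ)`: `D_{2p}`-equivariant functionals
(`ℤ` with the trivial action) supported on the degree-`n` cells. -/
def KcoC (m n : ℕ) : Submodule ℤ (DualC p) :=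
  (⨅ i : {i : CIdx p // ¬(validC m i ∧ degC i = n)},
      LinearMap.ker (LinearMap.applyₗ (single i.1 1)))
  ⊓ (⨅ g : DihedralGroup p, LinearMap.ker (LinearMap.lcomp ℤ ℤ (rhoC p g) - LinearMap.id))

open Classical in
/-- Projection of the total chain module onto its degree-`n` summand. -/
def projC (m n : ℕ) : ChC p →ₗ[ℤ] ChC p :=
  Finsupp.lift (ChC p) ℤ (CIdx p)
    (fun i => if validC m i ∧ degC i = n then single i 1 else 0)

/-- The coboundary taking a degree-`n` cochain `f` to the degree-`(n+1)` cochain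
`f ∘ d` (precomposition with the differential out of degree `n+1`). -/
def cobdC (m j n : ℕ) : DualC p →ₗ[ℤ] DualC p :=
  LinearMap.lcomp ℤ ℤ ((DC p j).comp (projC p m (n+1)))

/-- Degree-`n` cocycles of `Hom_{ℤ[D_{2p}]}(C(j), ℤ)`. -/
def ZcoC (m j n : ℕ) : Submodule ℤ (DualC p) := KcoC p m n ⊓ LinearMap.ker (cobdC p m j n)

/-- Degree-`n` cohomology of the cochain complex `Hom_{ℤ[D_{2p}]}(C(j), ℤ)`. -/
def HcoC (m j n : ℕ) : Type :=
  ↥(ZcoC p m j n) ⧸ Submodule.comap (ZcoC p m j n).subtype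
    (Submodule.map (cobdC p m j (n-1)) (KcoC p m (n-1)))

instance (m j n : ℕ) : AddCommGroup (HcoC p m j n) :=
  inferInstanceAs (AddCommGroup (↥(ZcoC p m j n) ⧸ Submodule.comap (ZcoC p m j n).subtype
    (Submodule.map (cobdC p m j (n-1)) (KcoC p m (n-1)))))

instance (m j n : ℕ) : Module ℤ (HcoC p m j n) :=
  inferInstanceAs (Module ℤ (↥(ZcoC p m j n) ⧸ Submodule.comap (ZcoC p m j n).subtype
    (Submodule.map (cobdC p m j (n-1)) (KcoC p m (n-1)))))


end DihedralCell

end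

/-!
The `D_{2p}`-invariant chains are spanned by the orbit sums of the cells. Let `A_{k,l}` be the orbit
sum of `a_{k,l}`, let `Y_{k,l}` with `l < k` be the difference of the orbit sums of `a_{k,l}` and
`b_{k,l}`, and let `Y_{k,k}` be minus the orbit sum of `c_k`. In this basis the differential is a
ladder: `d Y_{k,l}` is a multiple of `Y_{k,l-1}` (a rail, with coefficient `0` or `±2`), and
`d A_{k+1,l}` is a multiple of `Y_{k,l}` (a rung) plus a multiple of `A_{k+1,l-1}` (a rail). All
rungs have coefficient `1` except those into `Y_{k,k}` with `k` even, which have coefficient `p`.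

Below the top row everything therefore cancels along the rungs, apart from a `ℤ` generated by
`A_{1,0}`, which has no rung since there is no `Y_{0,0}`, and a `ℤ/p` at each `Y_{k,k}` with `k < m`
even. The top row `Y_{m,l}` is not hit by rungs. Its rails produce a `ℤ/2` at each even `l < m` and,
for even `m`, a `ℤ` at the corner `Y_{m,m}`.
-/

noncomputable section

namespace DihedralCell

theorem nonempty_subquotient_equiv {R M N : Type*} [Ring R] [AddCommGroup M] [AddCommGroup N]
    [Module R M] [Module R N] {Z B : Submodule R M} (φ : M →ₗ[R] N)
    (hsurj : ∀ y, ∃ x ∈ Z, φ x = y) (hker : ∀ x ∈ Z, φ x = 0 ↔ x ∈ B) :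
    Nonempty ((Z ⧸ B.comap Z.subtype) ≃ₗ[R] N) := by
  have hB : B.comap Z.subtype = LinearMap.ker (φ.domRestrict Z) := by
    ext x
    simp [hker x x.2]
  have hφ : Function.Surjective (φ.domRestrict Z) := fun y =>
    let ⟨x, hx, hxy⟩ := hsurj y
    ⟨⟨x, hx⟩, hxy⟩
  exact ⟨(Submodule.quotEquivOfEq _ _ hB).trans (LinearMap.quotKerEquivOfSurjective _ hφ)⟩

/-! ### The ladder complex -/

section Ladder

/-- Coordinates `(s, y)` of a chain of the ladder complex: `s k l` and `y k l` are its coefficients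
on the generators `A_{k,l}` and `Y_{k,l}`. -/
abbrev LadderCoord : Type := (ℕ → ℕ → ℤ) × (ℕ → ℕ → ℤ)

/-- The coefficient of `d Y_{k,l} = railCoeff k l • Y_{k,l-1}`, which is also that of `A_{k,l-1}` in
`d A_{k,l}`. -/
def railCoeff (k l : ℕ) : ℤ := if Odd l then 2 * (-1) ^ (k + 1) else 0

/-- The coefficient of `Y_{k,l}` in `d A_{k+1,l}`. It vanishes for `k = 0` because the ladder has no
generator `Y_{0,0}`. -/
def rungCoeff (q k l : ℕ) : ℤ := if k = 0 then 0 else if l = k ∧ Even k then q else 1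

/-- The degree-`n` chains of the ladder complex of height `m`: its generators in that degree are
`A_{k,l}` for `l < k ≤ m` and `Y_{k,l}` for `l ≤ k ≤ m`, `k ≠ 0`, where `k + l = n + 1`. -/
def ladder (m n : ℕ) : Submodule ℤ LadderCoord where
  carrier := {c | (∀ k l, ¬ (l < k ∧ k ≤ m ∧ k + l = n + 1) → c.1 k l = 0) ∧
    ∀ k l, ¬ (l ≤ k ∧ 0 < k ∧ k ≤ m ∧ k + l = n + 1) → c.2 k l = 0}
  zero_mem' := by simp
  add_mem' hc hc' := ⟨fun k l h => by simp [hc.1 k l h, hc'.1 k l h],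
    fun k l h => by simp [hc.2 k l h, hc'.2 k l h]⟩
  smul_mem' r _ hc := ⟨fun k l h => by simp [hc.1 k l h], fun k l h => by simp [hc.2 k l h]⟩

/-- The differential of the ladder complex in coordinates; `q` is the order of the torsion created
by the rungs `A_{k+1,k} → Y_{k,k}` with `k` even. -/
def ladderD (q : ℕ) : LadderCoord →ₗ[ℤ] LadderCoord where
  toFun c := (fun k l => railCoeff k (l + 1) * c.1 k (l + 1),
    fun k l => rungCoeff q k l * c.1 (k + 1) l + railCoeff k (l + 1) * c.2 k (l + 1))
  map_add' c c' := by
    ext <;> simp only [Prod.fst_add, Prod.snd_add, Pi.add_apply] <;> ring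
  map_smul' r c := by
    ext <;> simp only [Prod.smul_fst, Prod.smul_snd, Pi.smul_apply, smul_eq_mul,
      RingHom.id_apply] <;> ring

/-- The generator `A_{k,l}` of the ladder complex. -/
def ladderA (k l : ℕ) : LadderCoord := (Pi.single k (Pi.single l 1), 0)

/-- The generator `Y_{k,l}` of the ladder complex. -/
def ladderY (k l : ℕ) : LadderCoord := (0, Pi.single k (Pi.single l 1))

lemma ladderA_fst (k l k' l' : ℕ) :
    (ladderA k l).1 k' l' = if k = k' ∧ l = l' then 1 else 0 := by
  simp [ladderA, Pi.single_apply, ite_apply, ite_and, eq_comm]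

lemma ladderA_snd (k l k' l' : ℕ) : (ladderA k l).2 k' l' = 0 :=
  rfl

lemma ladderY_fst (k l k' l' : ℕ) : (ladderY k l).1 k' l' = 0 :=
  rfl

lemma ladderY_snd (k l k' l' : ℕ) :
    (ladderY k l).2 k' l' = if k = k' ∧ l = l' then 1 else 0 := by
  simp [ladderY, Pi.single_apply, ite_apply, ite_and, eq_comm]

lemma ladderD_ladderA_zero (q k : ℕ) :
    ladderD q (ladderA (k + 1) 0) = rungCoeff q k 0 • ladderY k 0 := by
  ext k' l'
  · simp [ladderD, ladderA_fst, ladderY_fst, -zsmul_eq_mul]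
  · by_cases h : k = k' ∧ 0 = l' <;>
      simp [ladderD, ladderA_fst, ladderA_snd, ladderY_snd, h, -zsmul_eq_mul]

lemma ladderD_ladderA_succ (q k l : ℕ) : ladderD q (ladderA (k + 1) (l + 1)) =
    rungCoeff q k (l + 1) • ladderY k (l + 1) + railCoeff (k + 1) (l + 1) • ladderA (k + 1) l := by
  ext k' l'
  · by_cases h : k + 1 = k' ∧ l = l' <;>
      simp [ladderD, ladderA_fst, ladderY_fst, h, -zsmul_eq_mul]
  · by_cases h : k = k' ∧ l + 1 = l' <;>
      simp [ladderD, ladderA_fst, ladderA_snd, ladderY_snd, h, -zsmul_eq_mul]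

lemma ladderD_ladderY_zero (q k : ℕ) : ladderD q (ladderY k 0) = 0 := by
  ext k' l' <;> simp [ladderD, ladderY_fst, ladderY_snd]

lemma ladderD_ladderY_succ (q k l : ℕ) :
    ladderD q (ladderY k (l + 1)) = railCoeff k (l + 1) • ladderY k l := by
  ext k' l'
  · simp [ladderD, ladderY_fst, -zsmul_eq_mul]
  · by_cases h : k = k' ∧ l = l' <;>
      simp [ladderD, ladderY_fst, ladderY_snd, h, -zsmul_eq_mul]

/-- The degree-`n` cycles of the ladder complex. -/
def ladderCycles (q m n : ℕ) : Submodule ℤ LadderCoord := ladder m n ⊓ LinearMap.ker (ladderD q)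

/-- The conditions under which a ladder cycle is a boundary; each one is void outside the degrees
in which it contributes to homology. -/
structure IsLadderNull (q m : ℕ) (c : LadderCoord) : Prop where
  base : c.1 1 0 = 0
  diagonal : ∀ k < m, Even k → (q : ℤ) ∣ c.2 k k
  row : ∀ l < m, Even l → (2 : ℤ) ∣ c.2 m l
  corner : Even m → c.2 m m = 0

variable {q m n : ℕ} {c : LadderCoord}

lemma railCoeff_succ_left (k l : ℕ) : railCoeff (k + 1) l = -railCoeff k l := by
  unfold railCoeff
  split_ifs <;> ring

lemma railCoeff_of_even {l : ℕ} (hl : Even l) (k : ℕ) : railCoeff k l = 0 :=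
  if_neg (Nat.not_odd_iff_even.mpr hl)

lemma railCoeff_ne_zero {l : ℕ} (hl : Odd l) (k : ℕ) : railCoeff k l ≠ 0 := by
  simp [railCoeff, hl]

lemma two_dvd_railCoeff (k l : ℕ) : (2 : ℤ) ∣ railCoeff k l := by
  unfold railCoeff
  split_ifs <;> simp

lemma railCoeff_dvd_two {l : ℕ} (hl : Odd l) (k : ℕ) : railCoeff k l ∣ 2 := by
  rw [railCoeff, if_pos hl]
  exact (isUnit_one.neg.pow _).mul_right_dvd.mpr dvd_rfl

lemma rungCoeff_ne_zero (hq : q ≠ 0) {k : ℕ} (hk : k ≠ 0) (l : ℕ) : rungCoeff q k l ≠ 0 := by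
  unfold rungCoeff
  split_ifs <;> simp_all

lemma rungCoeff_diag {k : ℕ} (hk : k ≠ 0) (he : Even k) : rungCoeff q k k = q := by
  simp [rungCoeff, hk, he]

lemma rungCoeff_of_ne {k l : ℕ} (hk : k ≠ 0) (hlk : l ≠ k) : rungCoeff q k l = 1 := by
  simp [rungCoeff, hk, hlk]

lemma rungCoeff_of_odd {k l : ℕ} (hk : k ≠ 0) (hl : Odd l) : rungCoeff q k l = 1 := by
  rw [rungCoeff, if_neg hk, if_neg]
  rintro ⟨rfl, he⟩
  exact Nat.not_even_iff_odd.mpr hl he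

lemma fst_eq_zero_of_mem_ladder (hc : c ∈ ladder m n) {k l : ℕ}
    (h : ¬ (l < k ∧ k ≤ m ∧ k + l = n + 1)) : c.1 k l = 0 :=
  hc.1 k l h

lemma snd_eq_zero_of_mem_ladder (hc : c ∈ ladder m n) {k l : ℕ}
    (h : ¬ (l ≤ k ∧ 0 < k ∧ k ≤ m ∧ k + l = n + 1)) : c.2 k l = 0 :=
  hc.2 k l h

lemma rung_relation (hc : c ∈ ladderCycles q m n) (k l : ℕ) :
    rungCoeff q k l * c.1 (k + 1) l + railCoeff k (l + 1) * c.2 k (l + 1) = 0 :=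
  congr_fun₂ (congr_arg Prod.snd (LinearMap.mem_ker.mp hc.2)) k l

lemma snd_top_eq_zero_of_odd (hc : c ∈ ladderCycles q m n) {l : ℕ} (hl : Odd l) :
    c.2 m l = 0 := by
  obtain ⟨l, rfl⟩ := Nat.exists_eq_add_one.mpr hl.pos
  have h := rung_relation hc m l
  rw [fst_eq_zero_of_mem_ladder hc.1 (by omega), mul_zero, zero_add] at h
  exact (mul_eq_zero.mp h).resolve_left (railCoeff_ne_zero hl m)

lemma IsLadderNull.of_boundary {z : LadderCoord} (hz : z ∈ ladder m (n + 1)) :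
    IsLadderNull q m (ladderD q z) where
  base := by simp [ladderD, fst_eq_zero_of_mem_ladder hz (k := 1) (l := 1) (by omega)]
  diagonal k _ hk := by
    rcases eq_or_ne k 0 with rfl | hk0
    · simp [ladderD, rungCoeff, snd_eq_zero_of_mem_ladder hz (k := 0) (l := 1) (by omega)]
    · simp [ladderD, rungCoeff_diag hk0 hk,
        snd_eq_zero_of_mem_ladder hz (k := k) (l := k + 1) (by omega)]
  row l _ _ := by
    simp [ladderD, fst_eq_zero_of_mem_ladder hz (k := m + 1) (l := l) (by omega),
      (two_dvd_railCoeff _ _).mul_right]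
  corner _ := by
    simp [ladderD, fst_eq_zero_of_mem_ladder hz (k := m + 1) (l := m) (by omega),
      snd_eq_zero_of_mem_ladder hz (k := m) (l := m + 1) (by omega)]

/-- A ladder chain whose boundary is a given null cycle: below the top row `y` is divided along the
rungs, in the top row along the rails. -/
def ladderFilling (q m : ℕ) (c : LadderCoord) : LadderCoord :=
  (fun k l => if k ≤ m then c.2 (k - 1) l / rungCoeff q (k - 1) l else 0,
    fun k l => if k = m ∧ Odd l then c.2 m (l - 1) / railCoeff m l else 0)

lemma ladderFilling_mem_ladder (hc : c ∈ ladder m n) (hnull : IsLadderNull q m c) :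
    ladderFilling q m c ∈ ladder m (n + 1) := by
  refine ⟨fun k l h => ?_, fun k l h => ?_⟩ <;> simp only [ladderFilling]
  · split_ifs with hk
    · rw [snd_eq_zero_of_mem_ladder hc (by omega), Int.zero_ediv]
    · rfl
  · split_ifs with hkl
    · obtain ⟨rfl, hl⟩ := hkl
      suffices c.2 k (l - 1) = 0 by rw [this, Int.zero_ediv]
      have hl0 := hl.pos
      by_cases hlk : l - 1 = k
      · rw [hlk]
        exact hnull.corner (hlk ▸ hl.tsub_odd odd_one)
      · exact snd_eq_zero_of_mem_ladder hc (by omega)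
    · rfl

lemma rungCoeff_dvd_snd (hc : c ∈ ladder m n) (hnull : IsLadderNull q m c) {k : ℕ} (hk : k < m)
    (l : ℕ) : rungCoeff q k l ∣ c.2 k l := by
  unfold rungCoeff
  split_ifs with hk0 hlk
  · rw [snd_eq_zero_of_mem_ladder hc (by omega)]
  · obtain ⟨rfl, he⟩ := hlk
    exact hnull.diagonal l hk he
  · exact one_dvd _

lemma fst_succ_eq (hq : q ≠ 0) (hc : c ∈ ladderCycles q m n) {k : ℕ} (hk : k ≠ 0) (l : ℕ) :
    c.1 (k + 1) l = railCoeff (k + 1) (l + 1) * c.2 k (l + 1) := by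
  have h := rung_relation hc k l
  rw [railCoeff_succ_left]
  by_cases hlk : l = k
  · rw [snd_eq_zero_of_mem_ladder hc.1 (by omega), mul_zero] at h ⊢
    simpa [rungCoeff_ne_zero hq hk] using h
  · rw [rungCoeff_of_ne hk hlk] at h
    linarith

lemma ladderD_ladderFilling_fst (hq : q ≠ 0) (hc : c ∈ ladderCycles q m n)
    (hnull : IsLadderNull q m c) (k l : ℕ) :
    railCoeff k (l + 1) * (ladderFilling q m c).1 k (l + 1) = c.1 k l := by
  simp only [ladderFilling]
  by_cases hkm : k ≤ m
  swap
  · rw [if_neg hkm, mul_zero, fst_eq_zero_of_mem_ladder hc.1 (by omega)]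
  rw [if_pos hkm]
  by_cases hk : k ≤ 1
  · rw [snd_eq_zero_of_mem_ladder hc.1 (by omega), Int.zero_ediv, mul_zero]
    by_cases hkl : k = 1 ∧ l = 0
    · rw [hkl.1, hkl.2, hnull.base]
    · rw [fst_eq_zero_of_mem_ladder hc.1 (by omega)]
  obtain ⟨k, rfl⟩ := Nat.exists_eq_add_one.mpr (by omega : 0 < k)
  rw [fst_succ_eq hq hc (by omega), add_tsub_cancel_right]
  rcases Nat.even_or_odd (l + 1) with hl | hl
  · simp [railCoeff_of_even hl]
  · rw [rungCoeff_of_odd (by omega) hl, Int.ediv_one]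

lemma ladderD_ladderFilling_snd (hc : c ∈ ladderCycles q m n)
    (hnull : IsLadderNull q m c) (k l : ℕ) :
    rungCoeff q k l * (ladderFilling q m c).1 (k + 1) l
      + railCoeff k (l + 1) * (ladderFilling q m c).2 k (l + 1) = c.2 k l := by
  have hladder := hc.1
  simp only [ladderFilling]
  rcases lt_trichotomy k m with hk | rfl | hk
  · rw [if_pos (by omega), if_neg (by omega), mul_zero, add_zero, add_tsub_cancel_right,
      Int.mul_ediv_cancel' (rungCoeff_dvd_snd hladder hnull hk l)]
  · rw [if_neg (by omega), mul_zero, zero_add, add_tsub_cancel_right]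
    rcases Nat.even_or_odd l with hl | hl
    · have hdvd : (2 : ℤ) ∣ c.2 k l := by
        rcases lt_trichotomy l k with hlk | rfl | hlk
        · exact hnull.row l hlk hl
        · simp [hnull.corner hl]
        · simp [snd_eq_zero_of_mem_ladder hladder (k := k) (l := l) (by omega)]
      rw [if_pos ⟨rfl, hl.add_one⟩,
        Int.mul_ediv_cancel' ((railCoeff_dvd_two hl.add_one k).trans hdvd)]
    · rw [railCoeff_of_even hl.add_one, zero_mul, snd_top_eq_zero_of_odd hc hl]
  · rw [if_neg (by omega), if_neg (by omega), snd_eq_zero_of_mem_ladder hladder (by omega)]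
    simp

theorem mem_map_ladderD_iff (hq : q ≠ 0) (hc : c ∈ ladderCycles q m n) :
    c ∈ (ladder m (n + 1)).map (ladderD q) ↔ IsLadderNull q m c := by
  constructor
  · rintro ⟨z, hz, rfl⟩
    exact .of_boundary hz
  · intro hnull
    refine ⟨ladderFilling q m c, ladderFilling_mem_ladder hc.1 hnull, ?_⟩
    ext k l
    · exact ladderD_ladderFilling_fst hq hc hnull k l
    · exact ladderD_ladderFilling_snd hc hnull k l

/-- The order of the summand `A_n`, with `0` for an infinite cyclic summand. -/
def freeOrder (n : ℕ) : ℕ := if n = 0 then 0 else 1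

/-- The order of the summand `P_n`. -/
def diagonalOrder (q m n : ℕ) : ℕ := if 0 < n ∧ n < 2 * m - 1 ∧ n % 4 = 3 then q else 1

/-- The order of the summand `Q_n`, with `0` for an infinite cyclic summand. -/
def rowOrder (m n : ℕ) : ℕ :=
  if n = 2 * m - 1 ∧ Even m then 0
  else if m - 1 ≤ n ∧ n < 2 * m - 1 ∧ n % 2 = (m - 1) % 2 then 2
  else 1

/-- The values at which the class of a degree-`n` ladder cycle is read off. The index `n + 1 - m`
only truncates in degrees where `rowOrder m n = 1`. -/
def ladderClass (q m n : ℕ) :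
    LadderCoord →ₗ[ℤ] ZMod (freeOrder n) × ZMod (diagonalOrder q m n) × ZMod (rowOrder m n) :=
  AddMonoidHom.toIntLinearMap
    { toFun c := (c.1 1 0, c.2 ((n + 1) / 2) ((n + 1) / 2), c.2 m (n + 1 - m))
      map_zero' := by simp
      map_add' c c' := by simp }

lemma ladderClass_apply (q m n : ℕ) (c : LadderCoord) : ladderClass q m n c =
    (((c.1 1 0 : ℤ) : ZMod (freeOrder n)),
      ((c.2 ((n + 1) / 2) ((n + 1) / 2) : ℤ) : ZMod (diagonalOrder q m n)),
      ((c.2 m (n + 1 - m) : ℤ) : ZMod (rowOrder m n))) :=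
  rfl

lemma freeOrder_dvd_iff (hc : c ∈ ladder m n) : (freeOrder n : ℤ) ∣ c.1 1 0 ↔ c.1 1 0 = 0 := by
  unfold freeOrder
  split_ifs with hn
  · simp
  · simp [fst_eq_zero_of_mem_ladder hc (k := 1) (l := 0) (by omega)]

lemma diagonalOrder_dvd_iff (hc : c ∈ ladder m n) :
    (diagonalOrder q m n : ℤ) ∣ c.2 ((n + 1) / 2) ((n + 1) / 2) ↔
      ∀ k < m, Even k → (q : ℤ) ∣ c.2 k k := by
  unfold diagonalOrder
  constructor
  · intro h k hk he
    by_cases hkn : 0 < k ∧ k + k = n + 1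
    · obtain ⟨i, rfl⟩ := he
      rwa [if_pos (by omega), show (n + 1) / 2 = i + i by omega] at h
    · simp [snd_eq_zero_of_mem_ladder hc (k := k) (l := k) (by omega)]
  · intro h
    split_ifs with hn
    · exact h _ (by omega) (Nat.even_iff.mpr (by omega))
    · simp

lemma rowOrder_dvd_iff (hc : c ∈ ladderCycles q m n) (hm : m ≠ 0) :
    (rowOrder m n : ℤ) ∣ c.2 m (n + 1 - m) ↔
      (∀ l < m, Even l → (2 : ℤ) ∣ c.2 m l) ∧ (Even m → c.2 m m = 0) := by
  unfold rowOrder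
  constructor
  · refine fun h => ⟨fun l hl he => ?_, fun he => ?_⟩
    · by_cases hln : m + l = n + 1
      · obtain ⟨i, rfl⟩ := he
        rwa [if_neg (by omega), if_pos (by omega), show n + 1 - m = i + i by omega] at h
      · simp [snd_eq_zero_of_mem_ladder hc.1 (k := m) (l := l) (by omega)]
    · by_cases hn : m + m = n + 1
      · rwa [if_pos ⟨by omega, he⟩, show n + 1 - m = m by omega, Nat.cast_zero,
          zero_dvd_iff] at h
      · exact snd_eq_zero_of_mem_ladder hc.1 (by omega)
  · rintro ⟨hrow, hcorner⟩
    split_ifs with hn hn'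
    · rw [show n + 1 - m = m by omega, hcorner hn.2]
      exact dvd_zero _
    · exact hrow _ (by omega) (Nat.even_iff.mpr (by omega))
    · simp

lemma ladderClass_eq_zero_iff (hc : c ∈ ladderCycles q m n) (hm : m ≠ 0) :
    ladderClass q m n c = 0 ↔ IsLadderNull q m c := by
  rw [ladderClass_apply, Prod.mk_eq_zero, Prod.mk_eq_zero, ZMod.intCast_zmod_eq_zero_iff_dvd,
    ZMod.intCast_zmod_eq_zero_iff_dvd, ZMod.intCast_zmod_eq_zero_iff_dvd, freeOrder_dvd_iff hc.1,
    diagonalOrder_dvd_iff hc.1, rowOrder_dvd_iff hc hm]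
  exact ⟨fun ⟨h₁, h₂, h₃, h₄⟩ => ⟨h₁, h₂, h₃, h₄⟩, fun ⟨h₁, h₂, h₃, h₄⟩ => ⟨h₁, h₂, h₃, h₄⟩⟩

/-- A ladder cycle with prescribed values in the positions read by `ladderClass`. -/
def ladderCycle (m n : ℕ) (a b u : ℤ) : LadderCoord :=
  (fun k l => if k = 1 ∧ l = 0 ∧ n = 0 then a else 0,
    fun k l =>
      if l ≤ k ∧ k + l = n + 1 ∧ Even l then
        if k = m then u else if k = l ∧ k < m then b else 0
      else 0)

lemma ladderCycle_mem_ladderCycles (q : ℕ) (hm : m ≠ 0) (a b u : ℤ) :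
    ladderCycle m n a b u ∈ ladderCycles q m n := by
  refine ⟨⟨fun k l h => if_neg (by omega), fun k l h => ?_⟩, LinearMap.mem_ker.mpr ?_⟩
  · simp only [ladderCycle]
    split_ifs <;> first | rfl | omega
  · ext k l
    · simp [ladderD, ladderCycle]
    · have hrung : rungCoeff q k l * (ladderCycle m n a b u).1 (k + 1) l = 0 := by
        by_cases hk : k = 0 <;> simp [rungCoeff, ladderCycle, hk]
      have hrail : railCoeff k (l + 1) * (ladderCycle m n a b u).2 k (l + 1) = 0 := by
        rcases Nat.even_or_odd (l + 1) with hl | hl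
        · rw [railCoeff_of_even hl, zero_mul]
        · simp [ladderCycle, Nat.not_even_iff_odd.mpr hl]
      exact (congr_arg₂ (· + ·) hrung hrail).trans (add_zero 0)

lemma ladderClass_ladderCycle (hm : m ≠ 0) (a b u : ℤ) :
    ladderClass q m n (ladderCycle m n a b u) = (↑a, ↑b, ↑u) := by
  simp only [ladderClass_apply, Prod.mk.injEq, ZMod.intCast_eq_intCast_iff_dvd_sub, ladderCycle,
    Nat.even_iff, true_and]
  refine ⟨?_, ?_, ?_⟩
  · unfold freeOrder
    split_ifs <;> simp_all
  · unfold diagonalOrder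
    split_ifs <;> first | omega | simp
  · unfold rowOrder
    simp only [Nat.even_iff]
    split_ifs <;> first | omega | simp

lemma exists_ladderClass_eq (q : ℕ) (hm : m ≠ 0)
    (y : ZMod (freeOrder n) × ZMod (diagonalOrder q m n) × ZMod (rowOrder m n)) :
    ∃ c ∈ ladderCycles q m n, ladderClass q m n c = y := by
  obtain ⟨a, b, u⟩ := y
  obtain ⟨a, rfl⟩ := ZMod.intCast_surjective a
  obtain ⟨b, rfl⟩ := ZMod.intCast_surjective b
  obtain ⟨u, rfl⟩ := ZMod.intCast_surjective u
  exact ⟨ladderCycle m n a b u, ladderCycle_mem_ladderCycles q hm a b u,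
    ladderClass_ladderCycle hm a b u⟩

end Ladder

/-! ### Cells and invariant chains -/

variable {p : ℕ}

/-- The cell `g·a_{k,l}` (for `false`) or `g·b_{k,l}` (for `true`), uniformly in `l`: for `l = 0` it
only depends on the coset of `g`. -/
def abCell : Bool → ℕ → ℕ → DihedralGroup p → CIdx p
  | false, k, 0, g => .a0 k g
  | true, k, 0, g => .b0 k g
  | false, k, l + 1, g => .a k (l + 1) g
  | true, k, l + 1, g => .b k (l + 1) g

lemma actC_abCell (g h : DihedralGroup p) (side : Bool) (k l : ℕ) :
    actC g (abCell side k l h) = abCell side k l (g * h) := by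
  cases side <;> cases l <;> rfl

lemma abCell_occurs_iff {m n k l : ℕ} {side : Bool} {g : DihedralGroup p} :
    validC m (abCell side k l g) ∧ degC (abCell side k l g) = n ↔
      l < k ∧ k ≤ m ∧ k + l = n + 1 := by
  cases side <;> cases l <;> simp only [abCell, validC, degC] <;> omega

lemma c_occurs_iff {m n k : ℕ} {g : DihedralGroup p} :
    validC m (.c k g) ∧ degC (.c k g) = n ↔ 0 < k ∧ k ≤ m ∧ k + k = n + 1 := by
  simp only [validC, degC]
  omega

lemma exists_abCell_or_c {m n : ℕ} {i : CIdx p} (hi : validC m i ∧ degC i = n) :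
    (∃ side k l g, (l < k ∧ k ≤ m ∧ k + l = n + 1) ∧ abCell side k l g = i) ∨
      ∃ k g, (0 < k ∧ k ≤ m ∧ k + k = n + 1) ∧ .c k g = i := by
  cases i with
  | a0 k q =>
    obtain ⟨g, rfl⟩ := QuotientGroup.mk_surjective q
    exact .inl ⟨false, k, 0, g, (abCell_occurs_iff (side := false) (l := 0)).mp hi, rfl⟩
  | b0 k q =>
    obtain ⟨g, rfl⟩ := QuotientGroup.mk_surjective q
    exact .inl ⟨true, k, 0, g, (abCell_occurs_iff (side := true) (l := 0)).mp hi, rfl⟩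
  | a k l g =>
    obtain ⟨l, rfl⟩ := Nat.exists_eq_add_one.mpr hi.1.1
    exact .inl ⟨false, k, l + 1, g, (abCell_occurs_iff (side := false) (l := l + 1)).mp hi, rfl⟩
  | b k l g =>
    obtain ⟨l, rfl⟩ := Nat.exists_eq_add_one.mpr hi.1.1
    exact .inl ⟨true, k, l + 1, g, (abCell_occurs_iff (side := true) (l := l + 1)).mp hi, rfl⟩
  | c k g => exact .inr ⟨k, g, c_occurs_iff.mp hi, rfl⟩

/-- The summands of `d a_{k,l+1}` (for `false`) or `d b_{k,l+1}` (for `true`) on the cells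
`a_{k,l}`, respectively `b_{k,l}`, translated by `g`. -/
def railPart (side : Bool) (k l : ℕ) (g : DihedralGroup p) : ChC p :=
  if l = 0 then single (abCell side k 0 g) ((-1) ^ (k + 1))
  else single (abCell side k l g) ((-1) ^ (k + l + 1)) +
    single (abCell side k l (g * tau p)) ((-1) ^ (k + 1))

/-- The chain `-(1 + σ) c_k - (-1) ^ k σ τ c_k`, translated by `g`. -/
def diagonalPart (j k : ℕ) (g : DihedralGroup p) : ChC p :=
  single (.c k g) (-1)
    - ∑ t ∈ Finset.range ((p - 1) / 2), single (.c k (g * zeta p ^ (j * (t + 1)))) 1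
    + ∑ t ∈ Finset.range ((p - 1) / 2),
        single (.c k (g * zeta p ^ (j * (t + 1)) * tau p)) ((-1) ^ (k + 1))

lemma bndC_abCell_zero (j : ℕ) (side : Bool) (k : ℕ) (g : DihedralGroup p) :
    bndC p j (abCell side (k + 1) 0 g) =
      if k = 0 then 0 else single (abCell false k 0 g) 1 - single (abCell true k 0 g) 1 := by
  cases side <;> simp [abCell, bndC]

lemma bndC_abCell_of_lt (j : ℕ) (side : Bool) {k l : ℕ} (hlk : l + 1 < k) (g : DihedralGroup p) :
    bndC p j (abCell side (k + 1) (l + 1) g) =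
      single (abCell false k (l + 1) g) 1 - single (abCell true k (l + 1) g) 1
        + railPart side (k + 1) l g := by
  have hne : l + 1 ≠ k := hlk.ne
  have hsign : (-1 : ℤ) ^ (k - l) = (-1) ^ k * (-1) ^ l := by
    rw [← pow_add, show k + l = k - l + 2 * l by omega, pow_add, pow_mul]
    simp
  cases side <;> cases l <;> simp [abCell, bndC, railPart, hne, hsign, pow_add, add_assoc]

lemma bndC_abCell_top (j : ℕ) (side : Bool) (k : ℕ) (g : DihedralGroup p) :
    bndC p j (abCell side (k + 2) (k + 1) g) =
      diagonalPart j (k + 1) g + railPart side (k + 2) k g := by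
  cases k with
  | zero =>
    cases side <;> simp [abCell, bndC, railPart, diagonalPart] <;> abel
  | succ k =>
    rcases Nat.even_or_odd k with hk | hk <;> cases side <;>
      simp [abCell, bndC, railPart, diagonalPart, pow_add, hk.neg_one_pow] <;> abel

lemma bndC_c (j k : ℕ) (g : DihedralGroup p) :
    bndC p j (.c (k + 1) g) =
      railPart true (k + 1) k (g * zeta p ^ (j * ((p + 1) / 2))) - railPart false (k + 1) k g := by
  cases k with
  | zero => simp [abCell, bndC, railPart]
  | succ k =>
    rcases Nat.even_or_odd k with hk | hk <;>
      simp [abCell, bndC, railPart, pow_add, hk.neg_one_pow] <;> abel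

lemma rhoC_single (g : DihedralGroup p) (i : CIdx p) (r : ℤ) :
    rhoC p g (single i r) = single (actC g i) r :=
  Finsupp.mapDomain_single

lemma bndC_actC (j : ℕ) (g : DihedralGroup p) (i : CIdx p) :
    bndC p j (actC g i) = rhoC p g (bndC p j i) := by
  cases i <;> simp only [bndC, actC] <;> split_ifs <;>
    simp [rhoC_single, actC, mul_assoc]

lemma DC_single (j : ℕ) (i : CIdx p) : DC p j (single i 1) = bndC p j i := by
  simp [DC]

lemma DC_rhoC (j : ℕ) (g : DihedralGroup p) (x : ChC p) :
    DC p j (rhoC p g x) = rhoC p g (DC p j x) := by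
  have : DC p j ∘ₗ rhoC p g = rhoC p g ∘ₗ DC p j := by
    ext i : 2
    simp [rhoC_single, DC_single, bndC_actC]
  exact LinearMap.congr_fun this x

lemma single_abCell_mem_Csub {m n k l : ℕ} (h : l < k ∧ k ≤ m ∧ k + l = n + 1) (side : Bool)
    (g : DihedralGroup p) (r : ℤ) : single (abCell side k l g) r ∈ Csub p m n :=
  Finsupp.single_mem_supported ℤ r (abCell_occurs_iff.mpr h)

lemma single_c_mem_Csub {m n k : ℕ} (h : 0 < k ∧ k ≤ m ∧ k + k = n + 1) (g : DihedralGroup p)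
    (r : ℤ) : single (.c k g) r ∈ Csub p m n :=
  Finsupp.single_mem_supported ℤ r (c_occurs_iff.mpr h)

lemma railPart_mem_Csub {m n k l : ℕ} (h : l < k ∧ k ≤ m ∧ k + l = n + 1) (side : Bool)
    (g : DihedralGroup p) : railPart side k l g ∈ Csub p m n := by
  unfold railPart
  split_ifs with hl
  · subst hl
    exact single_abCell_mem_Csub h ..
  · exact add_mem (single_abCell_mem_Csub h ..) (single_abCell_mem_Csub h ..)

lemma diagonalPart_mem_Csub {m n k : ℕ} (h : 0 < k ∧ k ≤ m ∧ k + k = n + 1) (j : ℕ)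
    (g : DihedralGroup p) : diagonalPart j k g ∈ Csub p m n :=
  add_mem (sub_mem (single_c_mem_Csub h ..) (sum_mem fun _ _ => single_c_mem_Csub h ..))
    (sum_mem fun _ _ => single_c_mem_Csub h ..)

lemma bndC_mem_Csub (j : ℕ) {m n : ℕ} {i : CIdx p} (hi : validC m i ∧ degC i = n) :
    bndC p j i ∈ Csub p m (n - 1) := by
  obtain ⟨side, k, l, g, h, rfl⟩ | ⟨k, g, h, rfl⟩ := exists_abCell_or_c hi
  · obtain ⟨k, rfl⟩ := Nat.exists_eq_add_one.mpr (Nat.zero_lt_of_lt h.1)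
    rcases l with _ | l
    · rw [bndC_abCell_zero]
      split_ifs with hk0
      · exact zero_mem _
      · exact sub_mem (single_abCell_mem_Csub (by omega) ..)
          (single_abCell_mem_Csub (by omega) ..)
    · obtain rfl | hlk : k = l + 1 ∨ l + 1 < k := by omega
      · rw [bndC_abCell_top]
        exact add_mem (diagonalPart_mem_Csub (by omega) ..) (railPart_mem_Csub (by omega) ..)
      · rw [bndC_abCell_of_lt j side hlk]
        exact add_mem (sub_mem (single_abCell_mem_Csub (by omega) ..)
          (single_abCell_mem_Csub (by omega) ..)) (railPart_mem_Csub (by omega) ..)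
  · obtain ⟨k, rfl⟩ := Nat.exists_eq_add_one.mpr h.1
    rw [bndC_c]
    exact sub_mem (railPart_mem_Csub (by omega) ..) (railPart_mem_Csub (by omega) ..)

lemma Csub_eq_span (m n : ℕ) :
    Csub p m n = Submodule.span ℤ ((single · 1) '' {i | validC m i ∧ degC i = n}) :=
  Finsupp.supported_eq_span_single ℤ _

lemma DC_mem_Csub (j : ℕ) {m n : ℕ} {x : ChC p} (hx : x ∈ Csub p m n) :
    DC p j x ∈ Csub p m (n - 1) := by
  suffices Csub p m n ≤ (Csub p m (n - 1)).comap (DC p j) from this hx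
  rw [Csub_eq_span, Submodule.span_le]
  rintro _ ⟨i, hi, rfl⟩
  simpa [DC_single] using bndC_mem_Csub j hi

lemma mem_InvC_iff {m n : ℕ} {x : ChC p} :
    x ∈ InvC p m n ↔ x ∈ Csub p m n ∧ ∀ g, rhoC p g x = x := by
  simp [InvC, Submodule.mem_iInf, sub_eq_zero]

lemma DC_mem_InvC (j : ℕ) {m n : ℕ} {x : ChC p} (hx : x ∈ InvC p m n) :
    DC p j x ∈ InvC p m (n - 1) := by
  rw [mem_InvC_iff] at hx ⊢
  exact ⟨DC_mem_Csub j hx.1, fun g => by rw [← DC_rhoC, hx.2]⟩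

lemma actC_inv_actC (g : DihedralGroup p) (i : CIdx p) : actC g⁻¹ (actC g i) = i := by
  cases i <;> simp [actC]

lemma actC_bijective (g : DihedralGroup p) : Function.Bijective (actC g) :=
  Function.bijective_iff_has_inverse.mpr
    ⟨actC g⁻¹, actC_inv_actC g, fun i => by simpa using actC_inv_actC g⁻¹ i⟩

lemma rhoC_eq_self_iff {g : DihedralGroup p} {x : ChC p} :
    rhoC p g x = x ↔ ∀ i, x (actC g i) = x i := by
  constructor
  · intro h i
    conv_lhs => rw [← h]
    exact Finsupp.mapDomain_apply ((actC_bijective g).injective) x i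
  · intro h
    ext i
    obtain ⟨i, rfl⟩ := (actC_bijective g).surjective i
    rw [h]
    exact Finsupp.mapDomain_apply ((actC_bijective g).injective) x i

lemma apply_eq_zero_of_mem_InvC {m n : ℕ} {x : ChC p} (hx : x ∈ InvC p m n) {i : CIdx p}
    (hi : ¬ (validC m i ∧ degC i = n)) : x i = 0 :=
  Finsupp.notMem_support_iff.mp fun h => hi (hx.1 h)

lemma apply_actC_of_mem_InvC {m n : ℕ} {x : ChC p} (hx : x ∈ InvC p m n)
    (g : DihedralGroup p) (i : CIdx p) : x (actC g i) = x i :=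
  rhoC_eq_self_iff.mp ((mem_InvC_iff.mp hx).2 g) i

lemma apply_abCell_of_mem_InvC {m n : ℕ} {x : ChC p} (hx : x ∈ InvC p m n) (side : Bool) (k l : ℕ)
    (g : DihedralGroup p) : x (abCell side k l g) = x (abCell side k l 1) := by
  simpa [actC_abCell] using apply_actC_of_mem_InvC hx g (abCell side k l 1)

lemma apply_c_of_mem_InvC {m n : ℕ} {x : ChC p} (hx : x ∈ InvC p m n) (k : ℕ)
    (g : DihedralGroup p) : x (.c k g) = x (.c k 1) := by
  simpa [actC] using apply_actC_of_mem_InvC hx g (.c k 1)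

/-- The ladder coordinates of an invariant chain, read off at the cells `a_{k,l}`, `b_{k,l}` and
`c_k`: the generators of the ladder are the orbit sums `A_{k,l}` of `a_{k,l}`, the differences
`Y_{k,l}` of the orbit sums of `a_{k,l}` and `b_{k,l}` for `l < k`, and minus the orbit sum of `c_k`
for `Y_{k,k}`. -/
def ladderCoord : ChC p →ₗ[ℤ] LadderCoord where
  toFun x := (fun k l => x (abCell false k l 1) + x (abCell true k l 1),
    fun k l => if l = k then -x (.c k 1) else -x (abCell true k l 1))
  map_add' x y := by
    ext k l
    · simp only [coe_add, Prod.fst_add, Pi.add_apply]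
      ring
    · simp only [coe_add, Prod.snd_add, Pi.add_apply]
      split_ifs <;> ring
  map_smul' r x := by
    ext k l
    · simp only [coe_smul, Prod.smul_fst, Pi.smul_apply, smul_eq_mul, RingHom.id_apply]
      ring
    · simp only [coe_smul, Prod.smul_snd, Pi.smul_apply, smul_eq_mul, RingHom.id_apply]
      split_ifs <;> ring

lemma ladderCoord_fst (x : ChC p) (k l : ℕ) :
    (ladderCoord x).1 k l = x (abCell false k l 1) + x (abCell true k l 1) :=
  rfl

lemma ladderCoord_snd_self (x : ChC p) (k : ℕ) : (ladderCoord x).2 k k = -x (.c k 1) :=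
  if_pos rfl

lemma ladderCoord_snd_of_ne {k l : ℕ} (hlk : l ≠ k) (x : ChC p) :
    (ladderCoord x).2 k l = -x (abCell true k l 1) :=
  if_neg hlk

lemma ladderCoord_mem_ladder {m n : ℕ} {x : ChC p} (hx : x ∈ InvC p m n) :
    ladderCoord x ∈ ladder m n := by
  constructor <;> intro k l h
  · simp [ladderCoord, apply_eq_zero_of_mem_InvC hx (mt abCell_occurs_iff.mp h)]
  · by_cases hkl : l = k
    · subst hkl
      simp [ladderCoord, apply_eq_zero_of_mem_InvC hx (i := .c l 1) (mt c_occurs_iff.mp (by omega))]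
    · simp [ladderCoord, hkl,
        apply_eq_zero_of_mem_InvC hx (i := abCell true k l 1) (mt abCell_occurs_iff.mp (by omega))]

lemma eq_zero_of_ladderCoord_eq_zero {m n : ℕ} {x : ChC p} (hx : x ∈ InvC p m n)
    (h : ladderCoord x = 0) : x = 0 := by
  have hs (k l : ℕ) : x (abCell false k l 1) + x (abCell true k l 1) = 0 :=
    congr_fun₂ (congr_arg Prod.fst h) k l
  have hy (k l : ℕ) : (if l = k then -x (.c k 1) else -x (abCell true k l 1)) = 0 :=
    congr_fun₂ (congr_arg Prod.snd h) k l
  ext i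
  by_cases hi : validC m i ∧ degC i = n
  swap
  · exact apply_eq_zero_of_mem_InvC hx hi
  obtain ⟨side, k, l, g, ⟨hlk, -⟩, rfl⟩ | ⟨k, g, -, rfl⟩ := exists_abCell_or_c hi
  · rw [apply_abCell_of_mem_InvC hx]
    have hb := hy k l
    have ha := hs k l
    rw [if_neg hlk.ne, neg_eq_zero] at hb
    cases side
    · simpa [hb] using ha
    · exact hb
  · rw [apply_c_of_mem_InvC hx]
    simpa using hy k k

open Classical in
/-- The value on cells of the invariant chain with given ladder coordinates. -/
def cellValue (m n : ℕ) (c : LadderCoord) (i : CIdx p) : ℤ :=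
  if validC m i ∧ degC i = n then
    match i with
    | .a0 k _ => c.1 k 0 + c.2 k 0
    | .b0 k _ => -c.2 k 0
    | .a k l _ => c.1 k l + c.2 k l
    | .b k l _ => -c.2 k l
    | .c k _ => -c.2 k k
  else 0

lemma finite_cells [NeZero p] (m n : ℕ) : {i : CIdx p | validC m i ∧ degC i = n}.Finite := by
  have hab := (Set.finite_univ (α := Bool)).prod
    ((Set.finite_Iic m).prod ((Set.finite_Iic m).prod (Set.finite_univ (α := DihedralGroup p))))
  have hc := (Set.finite_Iic m).prod (Set.finite_univ (α := DihedralGroup p))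
  refine ((hab.image fun (side, k, l, g) => abCell side k l g).union
    (hc.image fun (k, g) => .c k g)).subset fun i hi => ?_
  obtain ⟨side, k, l, g, h, rfl⟩ | ⟨k, g, h, rfl⟩ := exists_abCell_or_c hi
  · exact .inl ⟨(side, k, l, g), by simpa using by omega, rfl⟩
  · exact .inr ⟨(k, g), by simpa using h.2.1, rfl⟩

lemma cellValue_abCell (m n : ℕ) (c : LadderCoord) (side : Bool) (k l : ℕ)
    (g : DihedralGroup p) :
    cellValue m n c (abCell side k l g) =
      if l < k ∧ k ≤ m ∧ k + l = n + 1 then bif side then -c.2 k l else c.1 k l + c.2 k l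
      else 0 := by
  have hiff := abCell_occurs_iff (m := m) (n := n) (k := k) (l := l) (side := side) (g := g)
  cases side <;> cases l <;> simp_all [cellValue, abCell]

lemma cellValue_actC (m n : ℕ) (c : LadderCoord) (g : DihedralGroup p) (i : CIdx p) :
    cellValue m n c (actC g i) = cellValue m n c i := by
  cases i <;> rfl

lemma cellValue_c (m n : ℕ) (c : LadderCoord) (k : ℕ) (g : DihedralGroup p) :
    cellValue m n c (.c k g) = if 0 < k ∧ k ≤ m ∧ k + k = n + 1 then -c.2 k k else 0 := by
  simp [cellValue, c_occurs_iff]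

lemma ladderCoord_of_coe_eq_cellValue {m n : ℕ} {c : LadderCoord} (hc : c ∈ ladder m n)
    {x : ChC p} (hx : ⇑x = cellValue m n c) : ladderCoord x = c := by
  ext k l
  · by_cases h : l < k ∧ k ≤ m ∧ k + l = n + 1 <;>
      simp [ladderCoord, hx, cellValue_abCell, h, fst_eq_zero_of_mem_ladder hc]
  · rcases eq_or_ne l k with rfl | hlk
    · by_cases h : 0 < l ∧ l ≤ m ∧ l + l = n + 1 <;>
        simp [ladderCoord, hx, cellValue_c, h, snd_eq_zero_of_mem_ladder hc]
    · by_cases h : l < k ∧ k ≤ m ∧ k + l = n + 1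
      · simp [ladderCoord, hx, cellValue_abCell, h, hlk]
      · simp [ladderCoord, hx, cellValue_abCell, h, hlk,
          snd_eq_zero_of_mem_ladder hc (k := k) (l := l) (by omega)]

lemma exists_ladderCoord_eq [NeZero p] {m n : ℕ} {c : LadderCoord} (hc : c ∈ ladder m n) :
    ∃ x ∈ InvC p m n, ladderCoord x = c := by
  have hsupport : Function.support (cellValue (p := p) m n c) ⊆ {i | validC m i ∧ degC i = n} :=
    fun i hi => of_not_not fun h => hi (if_neg h)
  let x : ChC p := .ofSupportFinite (cellValue m n c) ((finite_cells m n).subset hsupport)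
  have hx : ⇑x = cellValue m n c := Finsupp.ofSupportFinite_coe
  refine ⟨x, mem_InvC_iff.mpr ⟨fun i hi => hsupport ?_, fun g => ?_⟩,
    ladderCoord_of_coe_eq_cellValue hc hx⟩
  · simpa [hx] using hi
  · exact rhoC_eq_self_iff.mpr fun i => by rw [hx, cellValue_actC]

/-! ### Norms -/

lemma card_Htau : Nat.card (Htau p) = 2 := by
  rw [Htau, Nat.card_zpowers, tau, orderOf_sr]

lemma abCell_eq_abCell_one_iff {side side' : Bool} {k k' l l' : ℕ} {g : DihedralGroup p} :
    abCell side k l g = abCell side' k' l' 1 ↔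
      (side = side' ∧ k = k' ∧ l = l') ∧ if l = 0 then g ∈ Htau p else g = 1 := by
  cases side <;> cases side' <;> cases l <;> cases l' <;>
    simp [abCell, QuotientGroup.eq, and_assoc]

lemma c_ne_abCell (side : Bool) (k k' l : ℕ) (g h : DihedralGroup p) :
    CIdx.c k g ≠ abCell side k' l h := by
  cases side <;> cases l <;> simp [abCell]

section Norm

variable [NeZero p]

variable (p) in
/-- The ladder coordinates of the norm `∑ g, g • x` of a chain `x`. Since they only depend on the
orbits of the cells in `x`, they can be compared with the differential one cell at a time. -/
def normCoord : ChC p →ₗ[ℤ] LadderCoord := ladderCoord ∘ₗ ∑ g, rhoC p g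

/-- The ladder coordinates of the orbit sum of `a_{k,l}` (for `false`) or `b_{k,l}` (for `true`). -/
def abCoord (side : Bool) (k l : ℕ) : LadderCoord :=
  bif side then ladderA k l - ladderY k l else ladderA k l

lemma abCoord_fst (side : Bool) (k l k' l' : ℕ) :
    (abCoord side k l).1 k' l' = if k = k' ∧ l = l' then 1 else 0 := by
  cases side <;> simp [abCoord, ladderA_fst, ladderY_fst]

lemma abCoord_snd (side : Bool) (k l k' l' : ℕ) :
    (abCoord side k l).2 k' l' = -if side ∧ k = k' ∧ l = l' then 1 else 0 := by
  cases side <;> simp [abCoord, ladderA_snd, ladderY_snd]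

lemma ladderD_abCoord_zero (q : ℕ) (side : Bool) (k : ℕ) :
    ladderD q (abCoord side (k + 1) 0) = rungCoeff q k 0 • ladderY k 0 := by
  cases side <;> simp [abCoord, ladderD_ladderA_zero, ladderD_ladderY_zero]

lemma ladderD_abCoord_succ (q : ℕ) (side : Bool) (k l : ℕ) :
    ladderD q (abCoord side (k + 1) (l + 1)) =
      rungCoeff q k (l + 1) • ladderY k (l + 1) +
        railCoeff (k + 1) (l + 1) • abCoord side (k + 1) l := by
  cases side <;>
    simp [abCoord, ladderD_ladderA_succ, ladderD_ladderY_succ, smul_sub, add_sub_assoc]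

lemma sum_single_abCell_apply (side side' : Bool) (k k' l l' : ℕ) (h : DihedralGroup p) (r : ℤ) :
    ∑ g, (single (abCell side k l (g * h)) r : ChC p) (abCell side' k' l' 1) =
      if side = side' ∧ k = k' ∧ l = l' then if l = 0 then 2 * r else r else 0 := by
  classical
  refine (Equiv.sum_comp (Equiv.mulRight h) fun g =>
    (single (abCell side k l g) r : ChC p) (abCell side' k' l' 1)).trans ?_
  simp only [single_apply, abCell_eq_abCell_one_iff]
  by_cases hkl : side = side' ∧ k = k' ∧ l = l'
  swap
  · simp [hkl]
  obtain ⟨rfl, rfl, rfl⟩ := hkl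
  by_cases hl : l = 0
  · have hcard : Finset.card {g | g ∈ Htau p} = 2 := by
      rw [← card_Htau (p := p), Nat.card_eq_fintype_card, Fintype.card_subtype]
    simp [hl, ← Finset.sum_filter, hcard]
  · simp [hl]

lemma sum_single_c_apply (k k' : ℕ) (h : DihedralGroup p) (r : ℤ) :
    ∑ g, (single (.c k (g * h)) r : ChC p) (.c k' 1) = if k = k' then r else 0 := by
  classical
  refine (Equiv.sum_comp (Equiv.mulRight h) fun g =>
    (single (.c k g) r : ChC p) (.c k' 1)).trans ?_
  by_cases hk : k = k' <;> simp [single_apply, hk]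

lemma normCoord_single (i : CIdx p) (r : ℤ) :
    normCoord p (single i r) = ∑ g, ladderCoord (single (actC g i) r) := by
  simp [normCoord, rhoC_single]

lemma normCoord_single_abCell {k l : ℕ} (hlk : l < k) (side : Bool) (g : DihedralGroup p)
    (r : ℤ) : normCoord p (single (abCell side k l g) r) =
      (if l = 0 then 2 * r else r) • abCoord side k l := by
  rw [normCoord_single]
  ext k' l'
  · simp only [actC_abCell, Prod.fst_sum, Finset.sum_apply, ladderCoord_fst,
      Finset.sum_add_distrib, sum_single_abCell_apply]
    cases side <;> simp [abCoord_fst, -zsmul_eq_mul, -ite_smul]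
  · rcases eq_or_ne l' k' with rfl | hlk'
    · have hne : ¬ (k = l' ∧ l = l') := by omega
      simp [actC_abCell, Prod.snd_sum, ladderCoord_snd_self,
        (c_ne_abCell side _ _ _ _ _).symm, abCoord_snd, hne, -zsmul_eq_mul, -ite_smul]
    · simp only [actC_abCell, Prod.snd_sum, Finset.sum_apply, ladderCoord_snd_of_ne hlk',
        Finset.sum_neg_distrib, sum_single_abCell_apply]
      cases side <;> simp [abCoord_snd, -zsmul_eq_mul, -ite_smul]

lemma normCoord_single_c (k : ℕ) (g : DihedralGroup p) (r : ℤ) :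
    normCoord p (single (.c k g) r) = -r • ladderY k k := by
  rw [normCoord_single]
  ext k' l'
  · simp [actC, Prod.fst_sum, ladderCoord_fst, c_ne_abCell, ladderY_fst, -zsmul_eq_mul]
  · rcases eq_or_ne l' k' with rfl | hlk'
    · simp [actC, Prod.snd_sum, ladderCoord_snd_self, sum_single_c_apply, ladderY_snd,
        -zsmul_eq_mul]
    · have hne : ¬ (k = k' ∧ k = l') := by omega
      simp [actC, Prod.snd_sum, ladderCoord_snd_of_ne hlk', c_ne_abCell, ladderY_snd, hne,
        -zsmul_eq_mul]

lemma normCoord_railPart {k l : ℕ} (hlk : l < k) (side : Bool) (g : DihedralGroup p) :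
    normCoord p (railPart side k l g) = railCoeff k (l + 1) • abCoord side k l := by
  rcases eq_or_ne l 0 with rfl | hl
  · simp [railPart, normCoord_single_abCell hlk, railCoeff]
  · rcases Nat.even_or_odd l with he | ho
    · have hsign : (-1 : ℤ) ^ (k + l + 1) = (-1) ^ (k + 1) := by
        rw [add_right_comm, pow_add, he.neg_one_pow, mul_one]
      simp only [railPart, if_neg hl, map_add, normCoord_single_abCell hlk, hsign, railCoeff,
        if_pos he.add_one, two_mul, add_smul]
    · simp [railPart, normCoord_single_abCell hlk, railCoeff, hl, pow_add, ho.neg_one_pow,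
        ho.add_one]

lemma normCoord_diagonalPart (hodd : Odd p) (j : ℕ) {k : ℕ} (hk : k ≠ 0) (g : DihedralGroup p) :
    normCoord p (diagonalPart j k g) = rungCoeff p k k • ladderY k k := by
  obtain ⟨q, rfl⟩ := hodd
  rcases Nat.even_or_odd k with he | ho
  · have hhalf : (2 * q + 1 - 1) / 2 = q := by omega
    simp only [diagonalPart, hhalf, he.add_one.neg_one_pow, map_add, map_sub, map_sum,
      normCoord_single_c, Finset.sum_const, Finset.card_range, rungCoeff_diag hk he]
    push_cast
    module
  · simp [diagonalPart, normCoord_single_c, rungCoeff_of_odd hk ho, pow_add, ho.neg_one_pow]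

lemma normCoord_bndC (hodd : Odd p) (j : ℕ) {m n : ℕ} {i : CIdx p}
    (hi : validC m i ∧ degC i = n) :
    normCoord p (bndC p j i) = ladderD p (normCoord p (single i 1)) := by
  obtain ⟨side, k, l, g, h, rfl⟩ | ⟨k, g, h, rfl⟩ := exists_abCell_or_c hi
  · obtain ⟨k, rfl⟩ := Nat.exists_eq_add_one.mpr (Nat.zero_lt_of_lt h.1)
    rw [normCoord_single_abCell h.1, map_smul]
    rcases l with _ | l
    · rw [ladderD_abCoord_zero, bndC_abCell_zero]
      by_cases hk0 : k = 0
      · simp [hk0, rungCoeff]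
      · rw [if_neg hk0]
        simp [normCoord_single_abCell (Nat.pos_of_ne_zero hk0), abCoord,
          rungCoeff_of_ne hk0 (Ne.symm hk0), smul_sub]
    · rw [ladderD_abCoord_succ, if_neg l.succ_ne_zero, one_smul]
      obtain rfl | hlk : k = l + 1 ∨ l + 1 < k := by omega
      · rw [bndC_abCell_top, map_add, normCoord_diagonalPart hodd j l.succ_ne_zero,
          normCoord_railPart (by omega)]
      · rw [bndC_abCell_of_lt j side hlk, map_add, map_sub, normCoord_railPart (by omega),
          normCoord_single_abCell hlk, normCoord_single_abCell hlk,
          rungCoeff_of_ne (by omega) hlk.ne]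
        simp [abCoord]
  · obtain ⟨k, rfl⟩ := Nat.exists_eq_add_one.mpr h.1
    rw [bndC_c, map_sub, normCoord_railPart k.lt_succ_self, normCoord_railPart k.lt_succ_self,
      normCoord_single_c, map_smul, ladderD_ladderY_succ]
    simp [abCoord, smul_sub]

lemma normCoord_DC (hodd : Odd p) (j : ℕ) {m n : ℕ} {x : ChC p} (hx : x ∈ Csub p m n) :
    normCoord p (DC p j x) = ladderD p (normCoord p x) := by
  rw [Csub_eq_span] at hx
  refine LinearMap.eqOn_span (f := normCoord p ∘ₗ DC p j) (g := ladderD p ∘ₗ normCoord p) ?_ hx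
  rintro _ ⟨i, hi, rfl⟩
  simpa [DC_single] using normCoord_bndC hodd j hi

lemma normCoord_of_mem_InvC {m n : ℕ} {x : ChC p} (hx : x ∈ InvC p m n) :
    normCoord p x = (2 * p : ℤ) • ladderCoord x := by
  have hfix (g : DihedralGroup p) : rhoC p g x = x := (mem_InvC_iff.mp hx).2 g
  simp [normCoord, hfix, DihedralGroup.card]

theorem ladderCoord_DC (hodd : Odd p) (j : ℕ) {m n : ℕ} {x : ChC p} (hx : x ∈ InvC p m n) :
    ladderCoord (DC p j x) = ladderD p (ladderCoord x) := by
  have h := normCoord_DC hodd j hx.1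
  rw [normCoord_of_mem_InvC hx, normCoord_of_mem_InvC (DC_mem_InvC j hx), map_smul] at h
  refine smul_right_injective LadderCoord ?_ h
  simp [NeZero.ne p]

end Norm

lemma ladderCoord_mem_ladderCycles [NeZero p] (hodd : Odd p) {j m n : ℕ} {x : ChC p}
    (hx : x ∈ ZinvC p m j n) : ladderCoord x ∈ ladderCycles p m n := by
  refine ⟨ladderCoord_mem_ladder hx.1, LinearMap.mem_ker.mpr ?_⟩
  rw [← ladderCoord_DC hodd j hx.1, LinearMap.mem_ker.mp hx.2, map_zero]

lemma exists_mem_ZinvC_ladderCoord_eq [NeZero p] (hodd : Odd p) (j : ℕ) {m n : ℕ}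
    {c : LadderCoord} (hc : c ∈ ladderCycles p m n) : ∃ x ∈ ZinvC p m j n, ladderCoord x = c := by
  obtain ⟨x, hx, rfl⟩ := exists_ladderCoord_eq (p := p) hc.1
  refine ⟨x, ⟨hx, LinearMap.mem_ker.mpr ?_⟩, rfl⟩
  refine eq_zero_of_ladderCoord_eq_zero (DC_mem_InvC j hx) ?_
  rw [ladderCoord_DC hodd j hx, LinearMap.mem_ker.mp hc.2]

lemma mem_map_DC_iff [NeZero p] (hodd : Odd p) (j : ℕ) {m n : ℕ} {x : ChC p}
    (hx : x ∈ InvC p m n) : x ∈ (InvC p m (n + 1)).map (DC p j) ↔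
      ladderCoord x ∈ (ladder m (n + 1)).map (ladderD p) := by
  constructor
  · rintro ⟨z, hz, rfl⟩
    exact ⟨ladderCoord z, ladderCoord_mem_ladder hz, (ladderCoord_DC hodd j hz).symm⟩
  · rintro ⟨c, hc, hcx⟩
    obtain ⟨z, hz, rfl⟩ := exists_ladderCoord_eq (p := p) hc
    refine ⟨z, hz, sub_eq_zero.mp ?_⟩
    refine eq_zero_of_ladderCoord_eq_zero (sub_mem (DC_mem_InvC j hz) hx) ?_
    rw [map_sub, ladderCoord_DC hodd j hz, hcx, sub_self]

end DihedralCell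

end

open DihedralCell in
theorem dihedral_cellular_invariant_homology_general
    (p : ℕ) (hodd : Odd p) (j m : ℕ) (hm : 1 ≤ m) :
    ∀ n : ℕ, Nonempty (HinvC p m j n ≃ₗ[ℤ]
      (ZMod (if n = 0 then 0 else 1) ×
       ZMod (if 0 < n ∧ n < 2 * m - 1 ∧ n % 4 = 3 then p else 1) ×
       ZMod (if n = 2 * m - 1 ∧ Even m then 0
             else if m - 1 ≤ n ∧ n < 2 * m - 1 ∧ n % 2 = (m - 1) % 2 then 2
             else 1))) := by
  intro n
  have hp : p ≠ 0 := hodd.pos.ne'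
  have hm0 : m ≠ 0 := Nat.one_le_iff_ne_zero.mp hm
  have : NeZero p := ⟨hp⟩
  change Nonempty (HinvC p m j n ≃ₗ[ℤ]
    ZMod (freeOrder n) × ZMod (diagonalOrder p m n) × ZMod (rowOrder m n))
  refine nonempty_subquotient_equiv (ladderClass p m n ∘ₗ ladderCoord)
    (fun y => ?_) fun x hx => ?_
  · obtain ⟨c, hc, hcy⟩ := exists_ladderClass_eq p hm0 y
    obtain ⟨x, hx, rfl⟩ := exists_mem_ZinvC_ladderCoord_eq hodd j hc
    exact ⟨x, hx, hcy⟩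
  · have hc := ladderCoord_mem_ladderCycles hodd hx
    rw [LinearMap.comp_apply, ladderClass_eq_zero_iff hc hm0, ← mem_map_ladderD_iff hp hc,
      mem_map_DC_iff hodd j hx.1]

open DihedralCell in
/-- The homology of the complex of `D_{2p}`-invariants of the dihedral
cellular complex satisfies `H_n ≅ A_n ⊕ P_n ⊕ Q_n`, where `A_n = ℤ` iff `n = 0`;
`P_n = ℤ/p` iff `0 < n < 2m-1` and `n ≡ 3 (mod 4)`; `Q_n = ℤ` iff `n = 2m-1` with `m`
even, and `Q_n = ℤ/2` iff `m-1 ≤ n < 2m-1` with `n ≡ m-1 (mod 2)`.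
(`ZMod 0 = ℤ`, `ZMod 1 = 0`.) -/
theorem dihedral_cellular_invariant_homology
    (p : ℕ) (hp : p.Prime) (hodd : Odd p)
    (j : ℕ) (hj1 : 1 ≤ j) (hj2 : j ≤ p - 1)
    (m : ℕ) (hm : 1 ≤ m) :
    ∀ n : ℕ, Nonempty (HinvC p m j n ≃ₗ[ℤ]
      (ZMod (if n = 0 then 0 else 1) ×
       ZMod (if 0 < n ∧ n < 2 * m - 1 ∧ n % 4 = 3 then p else 1) ×
       ZMod (if n = 2 * m - 1 ∧ Even m then 0
             else if m - 1 ≤ n ∧ n < 2 * m - 1 ∧ n % 2 = (m - 1) % 2 then 2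
             else 1))) :=
  dihedral_cellular_invariant_homology_general p hodd j m hm
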